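/- For the Curie–Weiss model without external field at inverse temperature 0 < β < 1, there exists a constant C > 0 depending only on β such that for all N ≥ 1, d_Kol(W, Z) = sup_{x∈ℝ} |P(W ≤ x) − P(Z ≤ x)| ≤ C/√N, where Z is a standard normal random variable. -/

import Mathlib

open MeasureTheory ProbabilityTheory Real

noncomputable section

/-- The spin value of a Boolean coordinate: `true ↦ +1`, `false ↦ −1`. -/
def cwSpin (b : Bool) : ℝ := if b then 1 else -1

/-- The total magnetization `s(x) = x₁ + ⋯ + x_N`. -/
def cwS {N : ℕ} (x : Fin N → Bool) : ℝ := ∑ i, cwSpin (x i)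

/-- The Curie–Weiss Gibbs weight `h(x) = exp(β s(x)²/(2N))` (relative to the uniform
distribution on `{−1,1}^N`). -/
def cwWeight (β : ℝ) {N : ℕ} (x : Fin N → Bool) : ℝ :=
  Real.exp (β * (cwS x) ^ 2 / (2 * N))

/-- The Curie–Weiss normalizing constant `Σ_x h(x)`. -/
def cwZ (β : ℝ) (N : ℕ) : ℝ := ∑ x : Fin N → Bool, cwWeight β x

/-- The Curie–Weiss probability of the configuration `x` (the uniform base measure cancels
in the tilted law). -/
def cwProb (β : ℝ) {N : ℕ} (x : Fin N → Bool) : ℝ := cwWeight β x / cwZ β N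

/-- The standardized magnetization `W = s(Y)/σ_N` with `σ_N² = N/(1−β)`. -/
def cwW (β : ℝ) {N : ℕ} (x : Fin N → Bool) : ℝ :=
  cwS x / Real.sqrt ((N : ℝ) / (1 - β))

/-!
Single-spin heat-bath flips are reversible for the Curie–Weiss law, so the upward and downward flip
fluxes of the magnetization `S` across each level `S ± 1` agree: for every `G`,
`E[r(S) G(S - 1)] = E[r(-S) G(S + 1)]`, where `r` is the flip rate. Taylor expansion of `tanh` turns
`r` into the rates of a discretised Ornstein–Uhlenbeck dynamics for `W` with lattice spacing `2δ`,
`δ = 1/σ_N`, up to an error `O(1/N)` that is controlled by the second moment of `W`.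

Take for `G` the solution `f` of Stein's equation `f' - x f = 𝟙(x ≤ t) - Φ t`, with `t` halfway
between two atoms of `W`. Then `f` is smooth on each cell `[W - δ, W + δ]`, and the trapezoid rule
`f(W + δ) - f(W - δ) = δ (f'(W - δ) + f'(W + δ)) + O(δ² (1 + |W|))` converts the flux balance into
`2δ (P(W ≤ t) - Φ t) = O(δ²)`. Moving `t` to the middle of its gap costs at most `δ`.
-/

open Set Filter Topology

section Calculus

lemma norm_sub_sub_trapezoid_le {E : Type*} [NormedAddCommGroup E] [NormedSpace ℝ E]
    {F g : ℝ → E} {a b L : ℝ} (hab : a ≤ b)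
    (hF : ∀ x ∈ Icc a b, HasDerivWithinAt F (g x) (Icc a b) x)
    (hg : ∀ x ∈ Icc a b, ∀ y ∈ Icc a b, ‖g x - g y‖ ≤ L * |x - y|) :
    ‖F b - F a - ((b - a) / 2) • (g a + g b)‖ ≤ L / 2 * (b - a) ^ 2 := by
  set c : E := (1 / 2 : ℝ) • (g a + g b) with hc
  have ha : a ∈ Icc a b := left_mem_Icc.2 hab
  have hb : b ∈ Icc a b := right_mem_Icc.2 hab
  have hderiv : ∀ x ∈ Icc a b,
      HasDerivWithinAt (fun y ↦ F y - y • c) (g x - c) (Icc a b) x := fun x hx ↦ by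
    simpa using! (hF x hx).fun_sub ((hasDerivWithinAt_id x _).smul_const c)
  have hbound : ∀ x ∈ Icc a b, ‖g x - c‖ ≤ L / 2 * (b - a) := fun x hx ↦ by
    calc ‖g x - c‖ = ‖(1 / 2 : ℝ) • ((g x - g a) + (g x - g b))‖ := by
          rw [hc]; congr 1; module
      _ ≤ 1 / 2 * (‖g x - g a‖ + ‖g x - g b‖) := by
          rw [norm_smul, norm_of_nonneg (by norm_num)]; gcongr; exact norm_add_le _ _
      _ ≤ 1 / 2 * (L * |x - a| + L * |x - b|) := by gcongr <;> apply hg <;> assumption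
      _ = L / 2 * (b - a) := by
          rw [abs_of_nonneg (sub_nonneg.2 hx.1), abs_of_nonpos (sub_nonpos.2 hx.2)]; ring
  calc ‖F b - F a - ((b - a) / 2) • (g a + g b)‖
      = ‖(F b - b • c) - (F a - a • c)‖ := by rw [hc]; congr 1; module
    _ ≤ L / 2 * (b - a) * ‖b - a‖ :=
        (convex_Icc a b).norm_image_sub_le_of_norm_hasDerivWithin_le hderiv hbound ha hb
    _ = L / 2 * (b - a) ^ 2 := by rw [norm_of_nonneg (sub_nonneg.2 hab)]; ring

lemma hasDerivAt_tanh (x : ℝ) : HasDerivAt tanh (1 - tanh x ^ 2) x := by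
  have h := (hasDerivAt_sinh x).div (hasDerivAt_cosh x) (cosh_pos x).ne'
  rw [show sinh / cosh = tanh from funext fun y ↦ (tanh_eq_sinh_div_cosh y).symm] at h
  refine h.congr_deriv ?_
  have := (cosh_pos x).ne'
  rw [tanh_eq_sinh_div_cosh]
  field_simp

lemma abs_tanh_le_abs (x : ℝ) : |tanh x| ≤ |x| := by
  have hbound : ∀ y ∈ univ, ‖1 - tanh y ^ 2‖ ≤ 1 := fun y _ ↦ by
    have := (abs_tanh_lt_one y).le
    rw [norm_of_nonneg] <;> nlinarith [sq_abs (tanh y), abs_nonneg (tanh y)]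
  simpa using convex_univ.norm_image_sub_le_of_norm_hasDerivWithin_le
    (fun y _ ↦ (hasDerivAt_tanh y).hasDerivWithinAt) hbound (mem_univ 0) (mem_univ x)

lemma abs_tanh_sub_self_le_sq (x : ℝ) : |tanh x - x| ≤ x ^ 2 := by
  have hderiv : ∀ y ∈ Metric.closedBall (0 : ℝ) |x|,
      HasDerivWithinAt (fun y ↦ tanh y - y) (-tanh y ^ 2) (Metric.closedBall 0 |x|) y :=
    fun y _ ↦ (((hasDerivAt_tanh y).sub (hasDerivAt_id y)).congr_deriv (by ring)).hasDerivWithinAt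
  have hbound : ∀ y ∈ Metric.closedBall (0 : ℝ) |x|, ‖-tanh y ^ 2‖ ≤ |x| := fun y hy ↦ by
    have hy' : |y| ≤ |x| := by simpa using hy
    calc ‖-tanh y ^ 2‖ = |tanh y| * |tanh y| := by rw [norm_neg, norm_pow, sq]; rfl
      _ ≤ 1 * |x| := by
          exact mul_le_mul (abs_tanh_lt_one y).le ((abs_tanh_le_abs y).trans hy')
            (abs_nonneg _) zero_le_one
      _ = |x| := one_mul _
  simpa [← sq] using (convex_closedBall (0 : ℝ) |x|).norm_image_sub_le_of_norm_hasDerivWithin_le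
    hderiv hbound (Metric.mem_closedBall_self (abs_nonneg x)) (by simp : x ∈ _)

lemma mul_tanh_self_nonneg (x : ℝ) : 0 ≤ x * tanh x := by
  rw [tanh_eq_sinh_div_cosh, ← mul_div_assoc]
  refine div_nonneg ?_ (cosh_pos x).le
  rcases le_total 0 x with hx | hx
  · exact mul_nonneg hx (sinh_nonneg_iff.2 hx)
  · exact mul_nonneg_of_nonpos_of_nonpos hx (sinh_nonpos_iff.2 hx)

lemma mul_tanh_mul_le (c x : ℝ) : x * tanh (c * x) ≤ max c 0 * x ^ 2 := by
  rcases le_or_gt 0 c with hc | hc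
  · calc x * tanh (c * x) ≤ |x| * |c * x| := by
          refine (le_abs_self _).trans ?_
          rw [abs_mul]
          exact mul_le_mul_of_nonneg_left (abs_tanh_le_abs _) (abs_nonneg x)
      _ = max c 0 * x ^ 2 := by
          rw [max_eq_left hc, abs_mul, abs_of_nonneg hc, ← sq_abs x]; ring
  · have := mul_tanh_self_nonneg (c * x)
    rw [max_eq_right hc.le, zero_mul]
    nlinarith

end Calculus

section Gaussian
open scoped NNReal

lemma continuous_gaussianPDFReal (m : ℝ) (v : ℝ≥0) : Continuous (gaussianPDFReal m v) := by
  rw [gaussianPDFReal_def]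
  fun_prop

lemma hasDerivAt_gaussianPDFReal (m : ℝ) (v : ℝ≥0) (x : ℝ) :
    HasDerivAt (gaussianPDFReal m v) (-((x - m) / v) * gaussianPDFReal m v x) x := by
  have h := ((((hasDerivAt_id x).sub_const m).pow 2).neg.div_const (2 * (v : ℝ))).exp.const_mul
    (√(2 * π * v))⁻¹
  rw [gaussianPDFReal_def]
  refine h.congr_deriv ?_
  simp
  ring

lemma cdf_gaussianReal_eq_integral (m : ℝ) {v : ℝ≥0} (hv : v ≠ 0) (x : ℝ) :
    cdf (gaussianReal m v) x = ∫ y in Iic x, gaussianPDFReal m v y := by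
  rw [cdf_eq_real, measureReal_def, gaussianReal_apply_eq_integral m hv, ENNReal.toReal_ofReal]
  exact setIntegral_nonneg measurableSet_Iic fun y _ ↦ gaussianPDFReal_nonneg m v y

lemma one_sub_cdf_gaussianReal_eq_integral (m : ℝ) {v : ℝ≥0} (hv : v ≠ 0) (x : ℝ) :
    1 - cdf (gaussianReal m v) x = ∫ y in Ioi x, gaussianPDFReal m v y := by
  have h := integral_add_compl (measurableSet_Iic (a := x)) (integrable_gaussianPDFReal m v)
  rw [integral_gaussianPDFReal_eq_one m hv, compl_Iic, ← cdf_gaussianReal_eq_integral m hv] at h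
  linarith

lemma hasDerivAt_cdf_gaussianReal (m : ℝ) {v : ℝ≥0} (hv : v ≠ 0) (x : ℝ) :
    HasDerivAt (cdf (gaussianReal m v)) (gaussianPDFReal m v x) x := by
  have hint (y : ℝ) : IntegrableOn (gaussianPDFReal m v) (Iic y) :=
    (integrable_gaussianPDFReal m v).integrableOn
  have h : (cdf (gaussianReal m v) : ℝ → ℝ) = fun y ↦
      cdf (gaussianReal m v) x + ∫ u in x..y, gaussianPDFReal m v u := by
    ext y
    rw [← intervalIntegral.integral_Iic_sub_Iic (hint x) (hint y),
      ← cdf_gaussianReal_eq_integral m hv, ← cdf_gaussianReal_eq_integral m hv, add_sub_cancel]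
  rw [h]
  exact ((continuous_gaussianPDFReal m v).integral_hasStrictDerivAt x x).hasDerivAt.const_add _

lemma tendsto_gaussianPDFReal_atTop (m : ℝ) (v : ℝ≥0) :
    Tendsto (gaussianPDFReal m v) atTop (𝓝 0) := by
  rcases eq_or_ne v 0 with rfl | hv
  · simpa using! tendsto_const_nhds
  have hv' : (0 : ℝ) < 2 * v := by positivity
  have hexponent : Tendsto (fun x : ℝ ↦ (x - m) ^ 2 / (2 * v)) atTop atTop :=
    ((tendsto_pow_atTop two_ne_zero).comp
      (tendsto_atTop_add_const_right _ (-m) tendsto_id)).atTop_div_const hv'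
  simpa [gaussianPDFReal_def, Function.comp_def, neg_div, sub_eq_add_neg] using!
    (tendsto_exp_neg_atTop_nhds_zero.comp hexponent).const_mul (√(2 * π * v))⁻¹

local notation "Φ" => cdf (gaussianReal 0 1)
local notation "φ" => gaussianPDFReal 0 1

lemma gaussianPDFReal_zero_one_apply (x : ℝ) : φ x = (√(2 * π))⁻¹ * exp (-x ^ 2 / 2) := by
  simp [gaussianPDFReal]

lemma gaussianPDFReal_zero_one_pos (x : ℝ) : 0 < φ x := gaussianPDFReal_pos 0 1 x one_ne_zero

lemma gaussianPDFReal_zero_one_neg (x : ℝ) : φ (-x) = φ x := by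
  simp [gaussianPDFReal_zero_one_apply]

lemma hasDerivAt_gaussianPDFReal_zero_one (x : ℝ) : HasDerivAt φ (-x * φ x) x := by
  simpa using hasDerivAt_gaussianPDFReal 0 1 x

lemma gaussianPDFReal_zero_one_le_one (x : ℝ) : φ x ≤ 1 := by
  rw [gaussianPDFReal_zero_one_apply]
  have hconst : (√(2 * π))⁻¹ ≤ 1 := inv_le_one_of_one_le₀ <| by
    rw [one_le_sqrt]; linarith [pi_gt_three]
  have hexp : exp (-x ^ 2 / 2) ≤ 1 := exp_le_one_iff.2 (by nlinarith [sq_nonneg x])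
  exact mul_le_one₀ hconst (exp_pos _).le hexp

lemma one_le_four_mul_gaussianPDFReal_zero : 1 ≤ 4 * φ 0 := by
  have hsqrt : √(2 * π) ≤ 4 := by
    rw [sqrt_le_left (by norm_num)]; linarith [pi_le_four]
  calc (1 : ℝ) ≤ 4 / √(2 * π) := (one_le_div₀ (by positivity)).2 hsqrt
    _ = 4 * φ 0 := by rw [gaussianPDFReal_zero_one_apply]; simp [div_eq_mul_inv]

lemma cdf_gaussianReal_zero_one_neg (x : ℝ) : Φ (-x) = 1 - Φ x := by
  rw [one_sub_cdf_gaussianReal_eq_integral 0 one_ne_zero,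
    cdf_gaussianReal_eq_integral 0 one_ne_zero, ← integral_comp_neg_Ioi x φ]
  simp only [gaussianPDFReal_zero_one_neg]

lemma abs_cdf_gaussianReal_zero_one_sub_le (x y : ℝ) : |Φ y - Φ x| ≤ |y - x| := by
  simpa using convex_univ.norm_image_sub_le_of_norm_hasDerivWithin_le (C := 1)
    (fun z _ ↦ (hasDerivAt_cdf_gaussianReal 0 one_ne_zero z).hasDerivWithinAt)
    (fun z _ ↦ by
      rw [norm_of_nonneg (gaussianPDFReal_nonneg 0 1 z)]
      exact gaussianPDFReal_zero_one_le_one z)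
    (mem_univ x) (mem_univ y)

lemma integrable_mul_gaussianPDFReal_zero_one : Integrable (fun y ↦ y * φ y) := by
  convert (integrable_mul_exp_neg_mul_sq (b := 1 / 2) (by norm_num)).const_mul (√(2 * π))⁻¹
    using 2 with y
  rw [gaussianPDFReal_zero_one_apply]
  ring_nf

lemma mul_one_sub_cdf_le_gaussianPDFReal (x : ℝ) : x * (1 - Φ x) ≤ φ x := by
  have hderiv : ∀ y ∈ Ici x, HasDerivAt (fun y ↦ -φ y) (y * φ y) y := fun y _ ↦
    (hasDerivAt_gaussianPDFReal_zero_one y).neg.congr_deriv (by ring)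
  have hint := integrable_mul_gaussianPDFReal_zero_one.integrableOn (s := Ioi x)
  calc x * (1 - Φ x) = ∫ y in Ioi x, x * φ y := by
        rw [one_sub_cdf_gaussianReal_eq_integral 0 one_ne_zero, integral_const_mul]
    _ ≤ ∫ y in Ioi x, y * φ y :=
        setIntegral_mono_on ((integrable_gaussianPDFReal 0 1).const_mul x).integrableOn hint
          measurableSet_Ioi fun y hy ↦
            mul_le_mul_of_nonneg_right (le_of_lt hy) (gaussianPDFReal_nonneg 0 1 y)
    _ = φ x := by
        rw [integral_Ioi_of_hasDerivAt_of_tendsto' hderiv hint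
          (tendsto_gaussianPDFReal_atTop 0 1).neg, neg_zero, zero_sub, neg_neg]

/-- The Mills ratio `R = (1 - Φ) / φ` of the standard normal law. -/
def millsRatio (x : ℝ) : ℝ := (1 - Φ x) / φ x

lemma millsRatio_neg (x : ℝ) : millsRatio (-x) = Φ x / φ x := by
  rw [millsRatio, cdf_gaussianReal_zero_one_neg, gaussianPDFReal_zero_one_neg, sub_sub_cancel]

lemma mul_millsRatio_le_one (x : ℝ) : x * millsRatio x ≤ 1 := by
  rw [millsRatio, ← mul_div_assoc, div_le_one (gaussianPDFReal_zero_one_pos x)]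
  exact mul_one_sub_cdf_le_gaussianPDFReal x

lemma hasDerivAt_millsRatio (x : ℝ) : HasDerivAt millsRatio (x * millsRatio x - 1) x := by
  have hφ := (gaussianPDFReal_zero_one_pos x).ne'
  refine (((hasDerivAt_cdf_gaussianReal 0 one_ne_zero x).const_sub 1).div
    (hasDerivAt_gaussianPDFReal_zero_one x) hφ).congr_deriv ?_
  rw [millsRatio]
  field_simp
  ring

lemma antitone_millsRatio : Antitone millsRatio :=
  antitone_of_hasDerivAt_nonpos hasDerivAt_millsRatio fun x ↦
    sub_nonpos.2 (mul_millsRatio_le_one x)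

lemma millsRatio_zero_le_two : millsRatio 0 ≤ 2 := by
  have hsymm := cdf_gaussianReal_zero_one_neg 0
  rw [neg_zero] at hsymm
  rw [millsRatio, div_le_iff₀ (gaussianPDFReal_zero_one_pos 0)]
  linarith [one_le_four_mul_gaussianPDFReal_zero]

/-- The bounded solution `f` of Stein's equation `f' x = x * f x + (𝟙(x ≤ t) - Φ t)`. -/
def steinSolution (t x : ℝ) : ℝ := Φ (min x t) * (1 - Φ (max x t)) / φ x

lemma steinSolution_of_le {t x : ℝ} (h : x ≤ t) :
    steinSolution t x = (1 - Φ t) * millsRatio (-x) := by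
  rw [steinSolution, min_eq_left h, max_eq_right h, millsRatio_neg]
  ring

lemma steinSolution_of_ge {t x : ℝ} (h : t ≤ x) : steinSolution t x = Φ t * millsRatio x := by
  rw [steinSolution, min_eq_right h, max_eq_left h, millsRatio, mul_div_assoc]

lemma hasDerivWithinAt_steinSolution_Iic {t x : ℝ} (h : x ≤ t) :
    HasDerivWithinAt (steinSolution t) (x * steinSolution t x + (1 - Φ t)) (Iic t) x := by
  have hderiv : HasDerivAt (fun y ↦ (1 - Φ t) * millsRatio (-y))
      (x * steinSolution t x + (1 - Φ t)) x := by
    refine (((hasDerivAt_millsRatio (-x)).comp x (hasDerivAt_neg x)).const_mul _).congr_deriv ?_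
    rw [steinSolution_of_le h]
    ring
  exact hderiv.hasDerivWithinAt.congr (fun y hy ↦ steinSolution_of_le hy) (steinSolution_of_le h)

lemma hasDerivWithinAt_steinSolution_Ici {t x : ℝ} (h : t ≤ x) :
    HasDerivWithinAt (steinSolution t) (x * steinSolution t x - Φ t) (Ici t) x := by
  have hderiv : HasDerivAt (fun y ↦ Φ t * millsRatio y) (x * steinSolution t x - Φ t) x := by
    refine ((hasDerivAt_millsRatio x).const_mul _).congr_deriv ?_
    rw [steinSolution_of_ge h]
    ring
  exact hderiv.hasDerivWithinAt.congr (fun y hy ↦ steinSolution_of_ge hy) (steinSolution_of_ge h)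

lemma steinSolution_nonneg (t x : ℝ) : 0 ≤ steinSolution t x :=
  div_nonneg (mul_nonneg (cdf_nonneg _ _) (sub_nonneg.2 (cdf_le_one _ _)))
    (gaussianPDFReal_nonneg 0 1 x)

lemma steinSolution_le_millsRatio_abs (t x : ℝ) : steinSolution t x ≤ millsRatio |x| := by
  have hφ := gaussianPDFReal_nonneg 0 1 x
  have hmin := monotone_cdf (gaussianReal 0 1) (min_le_left x t)
  have hmax := monotone_cdf (gaussianReal 0 1) (le_max_left x t)
  have h1 := cdf_le_one (gaussianReal 0 1) (max x t)
  rcases abs_cases x with ⟨hx, -⟩ | ⟨hx, -⟩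
  · rw [hx, steinSolution, millsRatio]
    refine div_le_div_of_nonneg_right ?_ hφ
    nlinarith [cdf_le_one (gaussianReal 0 1) (min x t)]
  · rw [hx, millsRatio_neg, steinSolution]
    refine div_le_div_of_nonneg_right ?_ hφ
    nlinarith [cdf_nonneg (gaussianReal 0 1) (min x t), cdf_nonneg (gaussianReal 0 1) (max x t)]

lemma abs_steinSolution_le_two (t x : ℝ) : |steinSolution t x| ≤ 2 := by
  rw [abs_of_nonneg (steinSolution_nonneg t x)]
  exact (steinSolution_le_millsRatio_abs t x).trans
    ((antitone_millsRatio (abs_nonneg x)).trans millsRatio_zero_le_two)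

lemma abs_mul_steinSolution_le_one (t x : ℝ) : |x * steinSolution t x| ≤ 1 := by
  rw [abs_mul, abs_of_nonneg (steinSolution_nonneg t x)]
  exact (mul_le_mul_of_nonneg_left (steinSolution_le_millsRatio_abs t x) (abs_nonneg x)).trans
    (mul_millsRatio_le_one |x|)

lemma abs_trapezoid_error_le_of_stein_equation {f : ℝ → ℝ} {a b c K M : ℝ} (hab : a ≤ b)
    (hf : ∀ x ∈ Icc a b, HasDerivWithinAt f (x * f x + c) (Icc a b) x)
    (hK : ∀ x ∈ Icc a b, |f x| ≤ K) (hxf : ∀ x ∈ Icc a b, |x * f x| ≤ 1) (hc : |c| ≤ 1)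
    (hM : ∀ x ∈ Icc a b, |x| ≤ M) :
    |f b - f a - (b - a) / 2 * ((a * f a + c) + (b * f b + c))| ≤
      (K + M * 2) / 2 * (b - a) ^ 2 := by
  refine norm_sub_sub_trapezoid_le hab hf fun x hx y hy ↦ ?_
  refine (convex_Icc a b).norm_image_sub_le_of_norm_hasDerivWithin_le
    (f := fun z ↦ z * f z + c) (f' := fun z ↦ 1 * f z + z * (z * f z + c))
    (fun z hz ↦ ((hasDerivWithinAt_id z _).mul (hf z hz)).add_const c) (fun z hz ↦ ?_) hy hx
  calc ‖1 * f z + z * (z * f z + c)‖ ≤ |f z| + |z| * |z * f z + c| := by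
        rw [one_mul, ← abs_mul]; exact abs_add_le _ _
    _ ≤ K + M * 2 := by
        have hderiv : |z * f z + c| ≤ 2 := by linarith [abs_add_le (z * f z) c, hxf z hz]
        exact add_le_add (hK z hz) (mul_le_mul (hM z hz) hderiv (abs_nonneg _)
          ((abs_nonneg z).trans (hM z hz)))

lemma abs_steinSolution_trapezoid_error_le {t w δ : ℝ} (hδ : 0 < δ)
    (hcell : w + δ ≤ t ∨ t ≤ w - δ) :
    |steinSolution t (w + δ) - steinSolution t (w - δ) -
        δ * ((w - δ) * steinSolution t (w - δ) + (w + δ) * steinSolution t (w + δ)) -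
        2 * δ * ((Iic t).indicator 1 w - Φ t)| ≤ 4 * δ ^ 2 * (1 + |w| + δ) := by
  set c : ℝ := (Iic t).indicator 1 w - Φ t with hc
  have hΦ0 := cdf_nonneg (gaussianReal 0 1) t
  have hΦ1 := cdf_le_one (gaussianReal 0 1) t
  have hderiv : ∀ x ∈ Icc (w - δ) (w + δ), HasDerivWithinAt (steinSolution t)
      (x * steinSolution t x + c) (Icc (w - δ) (w + δ)) x := fun x hx ↦ by
    rcases hcell with h | h
    · rw [hc, indicator_of_mem (show w ∈ Iic t by simp; linarith), Pi.one_apply]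
      exact (hasDerivWithinAt_steinSolution_Iic (hx.2.trans h)).mono
        fun y hy ↦ hy.2.trans h
    · rw [hc, indicator_of_notMem (by simp; linarith), zero_sub, ← sub_eq_add_neg]
      exact (hasDerivWithinAt_steinSolution_Ici (h.trans hx.1)).mono
        fun y hy ↦ h.trans hy.1
  have hc1 : |c| ≤ 1 := by
    rw [hc, abs_le]
    by_cases hw : w ∈ Iic t <;> simp [hw] <;> constructor <;> linarith
  have hM : ∀ x ∈ Icc (w - δ) (w + δ), |x| ≤ |w| + δ := fun x hx ↦
    abs_le.2 ⟨by linarith [hx.1, neg_abs_le w], by linarith [hx.2, le_abs_self w]⟩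
  convert abs_trapezoid_error_le_of_stein_equation (by linarith) hderiv
    (fun x _ ↦ abs_steinSolution_le_two t x) (fun x _ ↦ abs_mul_steinSolution_le_one t x)
    hc1 hM using 1
  · congr 1; ring
  · ring

end Gaussian

section DiscreteStein
local notation "Φ" => cdf (gaussianReal 0 1)

variable {Ω : Type*} {p W down up : Ω → ℝ} {δ : ℝ}

/-- The total deviation at `x` of the jump rates from those of the discretised Ornstein–Uhlenbeck
dynamics with step `2 * δ`: rate `1 + δ * m` downwards and `1 - δ * m` upwards, where `m` is the
midpoint of the jump. -/
def rateDefect (W down up : Ω → ℝ) (δ : ℝ) (x : Ω) : ℝ :=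
  |down x - (1 + δ * (W x - δ))| + |up x - (1 - δ * (W x + δ))|

lemma abs_steinSolution_flux_add_le {t : ℝ} (hδ : 0 < δ) (x : Ω)
    (hcell : W x + δ ≤ t ∨ t ≤ W x - δ) :
    |down x * steinSolution t (W x - δ) - up x * steinSolution t (W x + δ) +
        2 * δ * ((Iic t).indicator 1 (W x) - Φ t)| ≤
      2 * rateDefect W down up δ x + 4 * δ ^ 2 * (1 + |W x| + δ) := by
  set a := W x - δ
  set b := W x + δ
  set f := steinSolution t
  have hdown : |(down x - (1 + δ * a)) * f a| ≤ |down x - (1 + δ * a)| * 2 := by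
    rw [abs_mul]; gcongr; exact abs_steinSolution_le_two t a
  have hup : |(up x - (1 - δ * b)) * f b| ≤ |up x - (1 - δ * b)| * 2 := by
    rw [abs_mul]; gcongr; exact abs_steinSolution_le_two t b
  have htrap := abs_steinSolution_trapezoid_error_le hδ hcell
  rw [rateDefect]
  rw [abs_le] at hdown hup htrap ⊢
  constructor <;> linarith [hdown.1, hdown.2, hup.1, hup.2, htrap.1, htrap.2]

lemma exists_cell_boundary_of_lattice (hδ : 0 < δ) {c : ℝ}
    (hW : ∀ x, ∃ k : ℤ, W x = c + k * (2 * δ)) (t : ℝ) :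
    ∃ t', |t' - t| ≤ δ ∧ (∀ x, W x ≤ t ↔ W x ≤ t') ∧ ∀ x, W x + δ ≤ t' ∨ t' ≤ W x - δ := by
  set m : ℤ := ⌊(t - c) / (2 * δ)⌋
  have hle : c + m * (2 * δ) ≤ t := by
    linarith [(le_div_iff₀ (by positivity)).1 (Int.floor_le ((t - c) / (2 * δ)))]
  have hlt : t < c + (m + 1) * (2 * δ) := by
    linarith [(div_lt_iff₀ (by positivity)).1 (Int.lt_floor_add_one ((t - c) / (2 * δ)))]
  have hsplit : ∀ x, (W x ≤ t ∧ W x + δ ≤ c + m * (2 * δ) + δ) ∨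
      (t < W x ∧ c + m * (2 * δ) + δ ≤ W x - δ) := fun x ↦ by
    obtain ⟨k, hk⟩ := hW x
    rcases le_or_gt k m with hkm | hkm
    · have : (k : ℝ) ≤ m := by exact_mod_cast hkm
      left; constructor <;> nlinarith
    · have : (m : ℝ) + 1 ≤ k := by exact_mod_cast hkm
      right; constructor <;> nlinarith
  refine ⟨c + m * (2 * δ) + δ, abs_le.2 ⟨by linarith, by linarith⟩, fun x ↦ ?_,
    fun x ↦ (hsplit x).imp And.right And.right⟩
  rcases hsplit x with h | h
  · exact iff_of_true h.1 (by linarith)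
  · exact iff_of_false h.1.not_ge (by linarith)

variable [Fintype Ω]

/-- Balance of the probability flux for a birth–death dynamics moving `W` by `± 2 * δ`, with jump
rates `down` and `up`, when `x` has law `p`: across each level the downward and upward fluxes agree.
Levels are labelled by the midpoints `W x - δ`, `W x + δ` of the jumps and tested against `G`. -/
def MidpointBalance (p W down up : Ω → ℝ) (δ : ℝ) : Prop :=
  ∀ G : ℝ → ℝ, ∑ x, p x * (down x * G (W x - δ)) = ∑ x, p x * (up x * G (W x + δ))

lemma MidpointBalance.div_const (h : MidpointBalance p W down up δ) (σ : ℝ) :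
    MidpointBalance p (fun x ↦ W x / σ) down up (δ / σ) := fun G ↦ by
  simpa only [sub_div, add_div] using h fun w ↦ G (w / σ)

lemma sum_indicator_sub_eq_sum_mul (hp1 : ∑ x, p x = 1) (t c : ℝ) :
    ∑ x, {x | W x ≤ t}.indicator p x - c = ∑ x, p x * ((Iic t).indicator 1 (W x) - c) := by
  simp only [mul_sub, Finset.sum_sub_distrib, ← Finset.sum_mul, hp1, one_mul]
  congr 1
  refine Finset.sum_congr rfl fun x _ ↦ ?_
  by_cases hx : W x ≤ t <;> simp [hx]

lemma abs_sum_indicator_sub_cdf_le_of_cells (hp0 : ∀ x, 0 ≤ p x) (hp1 : ∑ x, p x = 1)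
    (hδ : 0 < δ) (hbal : MidpointBalance p W down up δ) {t : ℝ}
    (hcell : ∀ x, W x + δ ≤ t ∨ t ≤ W x - δ) :
    |∑ x, {x | W x ≤ t}.indicator p x - Φ t| ≤
      (∑ x, p x * rateDefect W down up δ x) / δ +
        2 * δ * (1 + ∑ x, p x * |W x| + δ) := by
  have hflux : 2 * δ * (∑ x, {x | W x ≤ t}.indicator p x - Φ t) =
      ∑ x, p x * (down x * steinSolution t (W x - δ) - up x * steinSolution t (W x + δ) +
        2 * δ * ((Iic t).indicator 1 (W x) - Φ t)) := by
    simp only [mul_add, mul_sub (p _), Finset.sum_add_distrib, Finset.sum_sub_distrib]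
    rw [hbal, sub_self, zero_add, sum_indicator_sub_eq_sum_mul hp1, Finset.mul_sum]
    exact Finset.sum_congr rfl fun x _ ↦ by ring
  have hbound : 2 * δ * |∑ x, {x | W x ≤ t}.indicator p x - Φ t| ≤
      2 * ∑ x, p x * rateDefect W down up δ x + 4 * δ ^ 2 * (1 + ∑ x, p x * |W x| + δ) := by
    calc 2 * δ * |∑ x, {x | W x ≤ t}.indicator p x - Φ t|
        = |2 * δ * (∑ x, {x | W x ≤ t}.indicator p x - Φ t)| := by
          rw [abs_mul, abs_of_pos (by positivity : 0 < 2 * δ)]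
      _ ≤ ∑ x, p x * (2 * rateDefect W down up δ x + 4 * δ ^ 2 * (1 + |W x| + δ)) := by
          rw [hflux]
          refine (Finset.abs_sum_le_sum_abs _ _).trans (Finset.sum_le_sum fun x _ ↦ ?_)
          rw [abs_mul, abs_of_nonneg (hp0 x)]
          exact mul_le_mul_of_nonneg_left (abs_steinSolution_flux_add_le hδ x (hcell x)) (hp0 x)
      _ = 2 * ∑ x, p x * rateDefect W down up δ x +
            4 * δ ^ 2 * (∑ x, p x + ∑ x, p x * |W x| + (∑ x, p x) * δ) := by
          simp only [Finset.mul_sum, Finset.sum_mul, ← Finset.sum_add_distrib]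
          exact Finset.sum_congr rfl fun x _ ↦ by ring
      _ = _ := by rw [hp1, one_mul]
  rw [← mul_le_mul_iff_right₀ (by positivity : 0 < 2 * δ)]
  refine hbound.trans_eq ?_
  field_simp
  ring

theorem abs_sum_indicator_sub_cdf_le_of_midpointBalance (hp0 : ∀ x, 0 ≤ p x)
    (hp1 : ∑ x, p x = 1) (hδ : 0 < δ) {c : ℝ} (hW : ∀ x, ∃ k : ℤ, W x = c + k * (2 * δ))
    (hbal : MidpointBalance p W down up δ) (t : ℝ) :
    |∑ x, {x | W x ≤ t}.indicator p x - Φ t| ≤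
      (∑ x, p x * rateDefect W down up δ x) / δ +
        δ * (3 + 2 * ∑ x, p x * |W x| + 2 * δ) := by
  obtain ⟨t', htt', hiff, hcell⟩ := exists_cell_boundary_of_lattice hδ hW t
  have hset : {x | W x ≤ t} = {x | W x ≤ t'} := ext hiff
  rw [hset]
  calc |∑ x, {x | W x ≤ t'}.indicator p x - Φ t|
      ≤ |∑ x, {x | W x ≤ t'}.indicator p x - Φ t'| + |Φ t' - Φ t| := abs_sub_le _ _ _
    _ ≤ _ := add_le_add (abs_sum_indicator_sub_cdf_le_of_cells hp0 hp1 hδ hbal hcell)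
        ((abs_cdf_gaussianReal_zero_one_sub_le t t').trans htt')
    _ = _ := by ring

end DiscreteStein

section CurieWeiss

variable {β : ℝ} {N : ℕ}

lemma cwSpin_not (b : Bool) : cwSpin (!b) = -cwSpin b := by
  cases b <;> simp [cwSpin]

lemma cwS_update_not (x : Fin N → Bool) (i : Fin N) :
    cwS (Function.update x i (!x i)) = cwS x - 2 * cwSpin (x i) := by
  unfold cwS
  rw [← Finset.add_sum_erase _ _ (Finset.mem_univ i),
    ← Finset.add_sum_erase _ (fun j ↦ cwSpin (x j)) (Finset.mem_univ i), Function.update_self,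
    cwSpin_not, Finset.sum_congr rfl fun j hj ↦ by
      rw [Function.update_of_ne (Finset.ne_of_mem_erase hj)]]
  ring

lemma abs_cwS_le (x : Fin N → Bool) : |cwS x| ≤ N := by
  have hspin (i : Fin N) : |cwSpin (x i)| = 1 := by cases x i <;> simp [cwSpin]
  simpa [cwS, hspin] using! Finset.abs_sum_le_sum_abs (fun i ↦ cwSpin (x i)) Finset.univ

lemma exists_cwS_eq (x : Fin N → Bool) : ∃ k : ℤ, cwS x = N + 2 * k := by
  have hspin (i : Fin N) : cwSpin (x i) = 1 + 2 * ((if x i then 0 else -1 : ℤ) : ℝ) := by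
    cases x i <;> norm_num [cwSpin]
  exact ⟨∑ i, if x i then 0 else -1, by
    simp [cwS, hspin, Finset.sum_add_distrib, Finset.mul_sum]⟩

lemma cwZ_pos (β : ℝ) (N : ℕ) : 0 < cwZ β N :=
  Finset.sum_pos (fun _ _ ↦ exp_pos _) Finset.univ_nonempty

lemma cwProb_nonneg (β : ℝ) (x : Fin N → Bool) : 0 ≤ cwProb β x :=
  div_nonneg (exp_pos _).le (cwZ_pos β N).le

lemma sum_cwProb (β : ℝ) (N : ℕ) : ∑ x : Fin N → Bool, cwProb β x = 1 := by
  simp only [cwProb]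
  rw [← Finset.sum_div]
  exact div_self (cwZ_pos β N).ne'

/-- The rate at which up-spins flip under heat-bath (Glauber) dynamics on `n` spins with
magnetization `s`, in units where the rates are close to `1`: `(n + s) / 2` spins are up, and each
feels the mean field `(s - 1) / n` of the others. By symmetry, down-spins flip at rate
`flipRate β n (-s)`. -/
def flipRate (β n s : ℝ) : ℝ := (1 + s / n) * (1 - tanh (β * ((s - 1) / n)))

lemma flipRate_neg (β n s : ℝ) :
    flipRate β n (-s) = (1 - s / n) * (1 + tanh (β * ((s + 1) / n))) := by
  rw [flipRate, show β * ((-s - 1) / n) = -(β * ((s + 1) / n)) by ring, tanh_neg]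
  ring

lemma exp_neg_mul_one_add_tanh (z : ℝ) : exp (-z) * (1 + tanh z) = exp z * (1 - tanh z) := by
  have hcosh := (cosh_pos z).ne'
  rw [← cosh_sub_sinh, ← cosh_add_sinh, tanh_eq_sinh_div_cosh]
  field_simp

lemma cwProb_update_mul_one_add_tanh (β : ℝ) {x : Fin N → Bool} {i : Fin N} (hx : x i = true) :
    cwProb β (Function.update x i (!x i)) * (1 + tanh (β * ((cwS x - 1) / N))) =
      cwProb β x * (1 - tanh (β * ((cwS x - 1) / N))) := by
  set z := β * ((cwS x - 1) / N) with hz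
  have hN : (N : ℝ) ≠ 0 := Nat.cast_ne_zero.2 (Fin.pos i).ne'
  have hS : cwS (Function.update x i (!x i)) = cwS x - 2 := by
    rw [cwS_update_not, hx, cwSpin, if_pos rfl, mul_one]
  set e := β * ((cwS x - 1) ^ 2 + 1) / (2 * N) with he
  have hold : cwWeight β x = exp e * exp z := by
    rw [cwWeight, ← exp_add, he, hz]; congr 1; field_simp; ring
  have hnew : cwWeight β (Function.update x i (!x i)) = exp e * exp (-z) := by
    rw [cwWeight, hS, ← exp_add, he, hz]; congr 1; field_simp; ring
  rw [cwProb, cwProb, hold, hnew]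
  linear_combination exp e / cwZ β N * exp_neg_mul_one_add_tanh z

lemma sum_cwProb_mul_site_balance (β : ℝ) (i : Fin N) (G : ℝ → ℝ) :
    ∑ x : Fin N → Bool, cwProb β x *
        ((1 + cwSpin (x i)) * (1 - tanh (β * ((cwS x - 1) / N))) * G (cwS x - 1)) =
      ∑ x : Fin N → Bool, cwProb β x *
        ((1 - cwSpin (x i)) * (1 + tanh (β * ((cwS x + 1) / N))) * G (cwS x + 1)) := by
  have hinv : Function.Involutive fun x : Fin N → Bool ↦ Function.update x i (!x i) :=
    fun x ↦ by simp
  refine Fintype.sum_equiv hinv.toPerm _ _ fun x ↦ ?_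
  simp only [Function.Involutive.coe_toPerm, cwS_update_not, Function.update_self, cwSpin_not]
  cases hx : x i with
  | false => simp [cwSpin]
  | true =>
    have hrev := cwProb_update_mul_one_add_tanh β hx
    rw [hx] at hrev
    rw [show cwSpin true = 1 from rfl, show cwS x - 2 * 1 + 1 = cwS x - 1 by ring]
    linear_combination -2 * G (cwS x - 1) * hrev

lemma midpointBalance_cwS (β : ℝ) (hN : 1 ≤ N) :
    MidpointBalance (cwProb β) (cwS (N := N)) (fun x ↦ flipRate β N (cwS x))
      (fun x ↦ flipRate β N (-cwS x)) 1 := fun G ↦ by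
  have hN0 : (N : ℝ) ≠ 0 := by positivity
  have hplus (x : Fin N → Bool) : 1 + cwS x / N = (∑ i, (1 + cwSpin (x i))) / N := by
    simp [Finset.sum_add_distrib, cwS, add_div, hN0]
  have hminus (x : Fin N → Bool) : 1 - cwS x / N = (∑ i, (1 - cwSpin (x i))) / N := by
    simp [Finset.sum_sub_distrib, cwS, sub_div, hN0]
  simp only [flipRate_neg]
  simp only [flipRate, hplus, hminus, Finset.sum_mul, Finset.mul_sum, Finset.sum_div]
  rw [Finset.sum_comm, Finset.sum_comm (s := (Finset.univ : Finset (Fin N → Bool)))]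
  refine Finset.sum_congr rfl fun i _ ↦ ?_
  have hsite := congrArg (· / (N : ℝ)) (sum_cwProb_mul_site_balance β i G)
  simp only [Finset.sum_div] at hsite
  convert hsite using 2 <;> ring

lemma le_flipRate_mul_sub_one (β : ℝ) {n s : ℝ} (hn : 0 < n) (hs : 0 ≤ n + s) :
    (1 + s / n) * ((s - 1) - max β 0 * (s - 1) ^ 2 / n) ≤ flipRate β n s * (s - 1) := by
  have hrate : 0 ≤ 1 + s / n := by
    rw [show 1 + s / n = (n + s) / n by field_simp]; positivity
  have htanh : (s - 1) * tanh (β * ((s - 1) / n)) ≤ max β 0 * (s - 1) ^ 2 / n := by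
    calc (s - 1) * tanh (β * ((s - 1) / n)) = n * ((s - 1) / n * tanh (β * ((s - 1) / n))) := by
          rw [← mul_assoc, mul_div_cancel₀ _ hn.ne']
      _ ≤ n * (max β 0 * ((s - 1) / n) ^ 2) :=
          mul_le_mul_of_nonneg_left (mul_tanh_mul_le _ _) hn.le
      _ = max β 0 * (s - 1) ^ 2 / n := by field_simp
  calc (1 + s / n) * ((s - 1) - max β 0 * (s - 1) ^ 2 / n)
      ≤ (1 + s / n) * ((s - 1) - (s - 1) * tanh (β * ((s - 1) / n))) := by gcongr
    _ = flipRate β n s * (s - 1) := by rw [flipRate]; ring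

lemma le_flipRate_mul_sub_flipRate_neg_mul (β : ℝ) {n s : ℝ} (hn : 0 < n) (hs : |s| ≤ n) :
    2 / n * ((1 - max β 0) * s ^ 2 - (n + max β 0)) ≤
      flipRate β n s * (s - 1) - flipRate β n (-s) * (s + 1) := by
  obtain ⟨hs1, hs2⟩ := abs_le.1 hs
  have hdown := le_flipRate_mul_sub_one β hn (by linarith : 0 ≤ n + s)
  have hup := le_flipRate_mul_sub_one β hn (by linarith : 0 ≤ n + -s)
  have hextra : 0 ≤ 4 * max β 0 * s ^ 2 / n ^ 2 := by
    have := le_max_right β 0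
    positivity
  calc 2 / n * ((1 - max β 0) * s ^ 2 - (n + max β 0))
      ≤ 2 / n * ((1 - max β 0) * s ^ 2 - (n + max β 0)) + 4 * max β 0 * s ^ 2 / n ^ 2 :=
        le_add_of_nonneg_right hextra
    _ = (1 + s / n) * ((s - 1) - max β 0 * (s - 1) ^ 2 / n) +
          (1 + -s / n) * ((-s - 1) - max β 0 * (-s - 1) ^ 2 / n) := by field_simp; ring
    _ ≤ flipRate β n s * (s - 1) - flipRate β n (-s) * (s + 1) := by linarith

lemma sum_cwProb_mul_cwS_sq_le (hβ : β < 1) (hN : 1 ≤ N) :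
    ∑ x : Fin N → Bool, cwProb β x * cwS x ^ 2 ≤ 2 / (1 - max β 0) * N := by
  have hN1 : (1 : ℝ) ≤ N := by exact_mod_cast hN
  have hb : 0 < 1 - max β 0 := sub_pos.2 (max_lt hβ one_pos)
  have hdrift : ∑ x : Fin N → Bool, cwProb β x *
      (2 / N * ((1 - max β 0) * cwS x ^ 2 - (N + max β 0))) ≤ 0 := by
    calc _ ≤ ∑ x : Fin N → Bool, cwProb β x *
          (flipRate β N (cwS x) * (cwS x - 1) - flipRate β N (-cwS x) * (cwS x + 1)) :=
          Finset.sum_le_sum fun x _ ↦ mul_le_mul_of_nonneg_left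
            (le_flipRate_mul_sub_flipRate_neg_mul β (by linarith) (abs_cwS_le x))
            (cwProb_nonneg β x)
      _ = 0 := by
          simp only [mul_sub (cwProb β _), Finset.sum_sub_distrib]
          exact sub_eq_zero.2 (midpointBalance_cwS β hN id)
  have hexpand : ∑ x : Fin N → Bool, cwProb β x *
        (2 / N * ((1 - max β 0) * cwS x ^ 2 - (N + max β 0))) =
      2 / N * ((1 - max β 0) * ∑ x : Fin N → Bool, cwProb β x * cwS x ^ 2 - (N + max β 0)) := by
    simp only [mul_left_comm (cwProb β _), mul_sub (cwProb β _), ← Finset.mul_sum,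
      Finset.sum_sub_distrib, ← Finset.sum_mul, sum_cwProb, one_mul]
  rw [hexpand] at hdrift
  have hmoment := nonpos_of_mul_nonpos_right hdrift (by positivity : 0 < 2 / (N : ℝ))
  rw [div_mul_eq_mul_div, le_div_iff₀ hb]
  linarith

lemma sq_sub_one_div_le {n : ℝ} (hn : 1 ≤ n) (s : ℝ) :
    ((s - 1) / n) ^ 2 ≤ 2 * ((1 + s ^ 2 / n) / n) := by
  have hn0 : 0 < n := by linarith
  calc ((s - 1) / n) ^ 2 ≤ 2 * (1 + s ^ 2) / n / n := by
        rw [div_pow, div_div, ← sq]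
        gcongr
        nlinarith [sq_nonneg (s + 1)]
    _ = 2 * ((1 / n + s ^ 2 / n) / n) := by ring
    _ ≤ 2 * ((1 + s ^ 2 / n) / n) := by gcongr; exact (div_le_one hn0).2 hn

lemma abs_flipRate_sub_le (β : ℝ) {n : ℝ} (hn : 1 ≤ n) (s : ℝ) :
    |flipRate β n s - (1 + (1 - β) * ((s - 1) / n))| ≤
      2 * (1 + |β|) ^ 2 * ((1 + s ^ 2 / n) / n) := by
  have hn0 : 0 < n := by linarith
  have hysq := sq_sub_one_div_le hn s
  set q := (1 + s ^ 2 / n) / n with hq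
  set y := (s - 1) / n with hy
  set T := tanh (β * y) with hT
  have hone : 1 / n ≤ q := by
    rw [hq]; gcongr; exact le_add_of_nonneg_right (by positivity)
  have hssq : (s / n) ^ 2 ≤ q := by
    rw [hq, div_pow, sq n, ← div_div]; gcongr; linarith
  have hTquad : |T - β * y| ≤ |β| ^ 2 * (2 * q) := by
    calc |T - β * y| ≤ |β| ^ 2 * y ^ 2 := by
          rw [sq_abs, ← mul_pow]; exact abs_tanh_sub_self_le_sq _
      _ ≤ |β| ^ 2 * (2 * q) := by gcongr
  have hcross : |s / n * T| ≤ |β| * (2 * q) := by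
    calc |s / n * T| ≤ |s / n| * |β * y| := by
          rw [abs_mul]; exact mul_le_mul_of_nonneg_left (abs_tanh_le_abs _) (abs_nonneg _)
      _ = |β| * (|s / n| * |y|) := by rw [abs_mul]; ring
      _ ≤ |β| * (2 * q) := by
          refine mul_le_mul_of_nonneg_left ?_ (abs_nonneg β)
          nlinarith [sq_nonneg (|s / n| - |y|), sq_abs (s / n), sq_abs y, sq_nonneg (s / n)]
  calc |flipRate β n s - (1 + (1 - β) * y)| = |1 / n - (T - β * y) - s / n * T| := by
        rw [flipRate, ← hy, ← hT, hy]; congr 1; ring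
    _ ≤ |1 / n| + |T - β * y| + |s / n * T| :=
        (abs_sub _ _).trans (by gcongr; exact abs_sub _ _)
    _ ≤ q + |β| ^ 2 * (2 * q) + |β| * (2 * q) := by
        rw [abs_of_pos (one_div_pos.2 hn0)]; gcongr
    _ ≤ 2 * (1 + |β|) ^ 2 * q := by
        have hq0 : 0 ≤ q := (one_div_pos.2 hn0).le.trans hone
        nlinarith [mul_nonneg (abs_nonneg β) hq0]

lemma sq_sqrt_div_one_sub (hβ : β < 1) (N : ℕ) : √(N / (1 - β)) ^ 2 = N / (1 - β) :=
  sq_sqrt (div_nonneg N.cast_nonneg (sub_nonneg.2 hβ.le))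

lemma midpointBalance_cwW (β : ℝ) (hN : 1 ≤ N) :
    MidpointBalance (cwProb β) (cwW (N := N) β) (fun x ↦ flipRate β N (cwS x))
      (fun x ↦ flipRate β N (-cwS x)) (1 / √(N / (1 - β))) :=
  (midpointBalance_cwS β hN).div_const _

lemma exists_cwW_eq (β : ℝ) (x : Fin N → Bool) :
    ∃ k : ℤ, cwW β x = N / √(N / (1 - β)) + k * (2 * (1 / √(N / (1 - β)))) := by
  obtain ⟨k, hk⟩ := exists_cwS_eq x
  exact ⟨k, by rw [cwW, hk]; ring⟩

lemma rateDefect_cwW_le (hβ : β < 1) (hN : 1 ≤ N) (x : Fin N → Bool) :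
    rateDefect (cwW β) (fun x ↦ flipRate β N (cwS x)) (fun x ↦ flipRate β N (-cwS x))
      (1 / √(N / (1 - β))) x ≤ 4 * (1 + |β|) ^ 2 * ((1 + cwS x ^ 2 / N) / N) := by
  have hN1 : (1 : ℝ) ≤ N := by exact_mod_cast hN
  have hβ' : 1 - β ≠ 0 := (sub_pos.2 hβ).ne'
  have hscale (s : ℝ) : 1 / √(N / (1 - β)) * (s / √(N / (1 - β))) = (1 - β) * (s / N) := by
    rw [div_mul_div_comm, ← sq, sq_sqrt_div_one_sub hβ]
    field_simp
  have hdown := abs_flipRate_sub_le β hN1 (cwS x)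
  have hup := abs_flipRate_sub_le β hN1 (-cwS x)
  rw [neg_sq] at hup
  rw [rateDefect, cwW, ← sub_div, ← add_div, hscale, hscale]
  rw [show 1 - (1 - β) * ((cwS x + 1) / N) = 1 + (1 - β) * ((-cwS x - 1) / N) by ring]
  exact (add_le_add hdown hup).trans_eq (by ring)

lemma sum_cwProb_mul_rateDefect_le (hβ : β < 1) (hN : 1 ≤ N) :
    ∑ x : Fin N → Bool, cwProb β x * rateDefect (cwW β) (fun x ↦ flipRate β N (cwS x))
      (fun x ↦ flipRate β N (-cwS x)) (1 / √(N / (1 - β))) x ≤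
      4 * (1 + |β|) ^ 2 * (1 + 2 / (1 - max β 0)) / N := by
  calc _ ≤ ∑ x : Fin N → Bool, cwProb β x * (4 * (1 + |β|) ^ 2 * ((1 + cwS x ^ 2 / N) / N)) :=
        Finset.sum_le_sum fun x _ ↦
          mul_le_mul_of_nonneg_left (rateDefect_cwW_le hβ hN x) (cwProb_nonneg β x)
    _ = 4 * (1 + |β|) ^ 2 / N * (∑ x : Fin N → Bool, cwProb β x +
          (∑ x : Fin N → Bool, cwProb β x * cwS x ^ 2) / N) := by
        rw [Finset.sum_div, ← Finset.sum_add_distrib, Finset.mul_sum]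
        exact Finset.sum_congr rfl fun x _ ↦ by ring
    _ ≤ 4 * (1 + |β|) ^ 2 / N * (1 + 2 / (1 - max β 0) * N / N) := by
        rw [sum_cwProb]
        gcongr
        exact sum_cwProb_mul_cwS_sq_le hβ hN
    _ = 4 * (1 + |β|) ^ 2 * (1 + 2 / (1 - max β 0)) / N := by field_simp

lemma two_mul_sum_cwProb_mul_abs_cwW_le (hβ : β < 1) (hN : 1 ≤ N) :
    2 * ∑ x : Fin N → Bool, cwProb β x * |cwW β x| ≤
      1 + (1 - β) * (2 / (1 - max β 0)) := by
  have hβ' : 0 < 1 - β := sub_pos.2 hβ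
  have hW (x : Fin N → Bool) : 2 * |cwW β x| ≤ 1 + (1 - β) / N * cwS x ^ 2 := by
    have hsq : cwW β x ^ 2 = (1 - β) / N * cwS x ^ 2 := by
      rw [cwW, div_pow, sq_sqrt_div_one_sub hβ]
      field_simp
    nlinarith [sq_nonneg (|cwW β x| - 1), sq_abs (cwW β x)]
  calc 2 * ∑ x : Fin N → Bool, cwProb β x * |cwW β x|
      ≤ ∑ x : Fin N → Bool, cwProb β x * (1 + (1 - β) / N * cwS x ^ 2) := by
        rw [Finset.mul_sum]
        refine Finset.sum_le_sum fun x _ ↦ ?_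
        rw [mul_left_comm]
        exact mul_le_mul_of_nonneg_left (hW x) (cwProb_nonneg β x)
    _ = ∑ x : Fin N → Bool, cwProb β x +
          (1 - β) / N * ∑ x : Fin N → Bool, cwProb β x * cwS x ^ 2 := by
        rw [Finset.mul_sum, ← Finset.sum_add_distrib]
        exact Finset.sum_congr rfl fun x _ ↦ by ring
    _ ≤ 1 + (1 - β) / N * (2 / (1 - max β 0) * N) := by
        rw [sum_cwProb]
        gcongr
        exact sum_cwProb_mul_cwS_sq_le hβ hN
    _ = 1 + (1 - β) * (2 / (1 - max β 0)) := by field_simp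

end CurieWeiss

theorem curie_weiss_kolmogorov_clt_general (β : ℝ) (hβ1 : β < 1) :
    ∃ C : ℝ, 0 < C ∧ ∀ N : ℕ, 1 ≤ N → ∀ t : ℝ,
      |(∑ x : Fin N → Bool,
            Set.indicator {x' : Fin N → Bool | cwW β x' ≤ t} (cwProb β) x) -
          ((gaussianReal 0 1) (Set.Iic t)).toReal| ≤ C / Real.sqrt N := by
  have hβ : 0 < 1 - β := sub_pos.2 hβ1
  set κ := 2 / (1 - max β 0)
  have hκ : 0 < κ := div_pos two_pos (sub_pos.2 (max_lt hβ1 one_pos))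
  set A := 4 * (1 + |β|) ^ 2 * (1 + κ)
  refine ⟨A / √(1 - β) + √(1 - β) * (3 + (1 + (1 - β) * κ) + 2 * √(1 - β)), by positivity,
    fun N hN t ↦ ?_⟩
  have hN1 : 1 ≤ √(N : ℝ) := one_le_sqrt.2 (by exact_mod_cast hN)
  have hδ : 1 / √(N / (1 - β)) = √(1 - β) / √N := by rw [sqrt_div' _ hβ.le, one_div_div]
  have hstein := abs_sum_indicator_sub_cdf_le_of_midpointBalance (cwProb_nonneg β)
    (sum_cwProb β N) (by positivity) (exists_cwW_eq β) (midpointBalance_cwW β hN) t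
  have hdefect := sum_cwProb_mul_rateDefect_le hβ1 hN
  have hW := two_mul_sum_cwProb_mul_abs_cwW_le hβ1 hN
  rw [cdf_eq_real, hδ] at hstein
  rw [hδ] at hdefect
  calc _ ≤ A / N / (√(1 - β) / √N) +
          √(1 - β) / √N * (3 + (1 + (1 - β) * κ) + 2 * √(1 - β)) := by
        refine hstein.trans ?_
        gcongr
        exact div_le_self (sqrt_nonneg _) hN1
    _ = _ := by
        have hsq : √(N : ℝ) ^ 2 = N := sq_sqrt N.cast_nonneg
        field_simp
        rw [hsq]
        ring

/-- **CLT for the subcritical Curie–Weiss model (Kolmogorov distance)**: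
`d_Kol(W, Z) ≤ C/√N`. -/
theorem curie_weiss_kolmogorov_clt (β : ℝ) (hβ0 : 0 < β) (hβ1 : β < 1) :
    ∃ C : ℝ, 0 < C ∧ ∀ N : ℕ, 1 ≤ N → ∀ t : ℝ,
      |(∑ x : Fin N → Bool,
            Set.indicator {x' : Fin N → Bool | cwW β x' ≤ t} (cwProb β) x) -
          ((gaussianReal 0 1) (Set.Iic t)).toReal| ≤ C / Real.sqrt N :=
  curie_weiss_kolmogorov_clt_general β hβ1
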